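/- arXiv:1712.05600 — 2 statements merged into one kernel-verified Lean document; each statement's English description precedes it below -/
import Mathlib

section
/- For any n×n (p,u)-matrix T over a K-algebra A, the quantum row-determinant equals the quantum column-determinant: Σ_{σ ∈ S_n} (−q)_σ t_{1σ(1)} t_{2σ(2)} ⋯ t_{nσ(n)} = Σ_{σ ∈ S_n} (−p)_σ t_{σ(1)1} t_{σ(2)2} ⋯ t_{σ(n)n}. -/
open Finset

variable {K : Type*} [Field K] {A : Type*} [Ring A] [Algebra K A]

/-- The `(p,u)`-condition on the multiparameters: `u` is a unit with `u² ≠ -1`, the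
`pᵢⱼ, qᵢⱼ` are units with `pᵢⱼqᵢⱼ = u²` for `i < j`, `pᵢⱼpⱼᵢ = qᵢⱼqⱼᵢ = 1` and
`pᵢᵢ = qᵢᵢ = 1`. -/
def PUCondition {N : ℕ} (p q : Fin N → Fin N → K) (u : K) : Prop :=
  u ≠ 0 ∧ u ^ 2 ≠ -1 ∧
    (∀ i j : Fin N, i < j → p i j * q i j = u ^ 2) ∧
    (∀ i j : Fin N, p i j * p j i = 1) ∧
    (∀ i j : Fin N, q i j * q j i = 1) ∧
    (∀ i : Fin N, p i i = 1 ∧ q i i = 1)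

/-- A `(p,u)`-matrix over the `K`-algebra `A`. -/
def IsPUMatrix {N : ℕ} (p q : Fin N → Fin N → K) (u : K)
    (T : Matrix (Fin N) (Fin N) A) : Prop :=
  ∀ i j k l : Fin N, i < j → k < l →
    T i k * T i l = q k l • (T i l * T i k) ∧
    T i k * T j k = p i j • (T j k * T i k) ∧
    q k l • (T i l * T j k) = p i j • (T j k * T i l) ∧
    (q k l)⁻¹ • (T i k * T j l) - (q i j)⁻¹ • (T j l * T i k)
      = (1 - u⁻¹ ^ 2) • (T i l * T j k)

/-- Ordered product `f 0 * f 1 * ⋯ * f (t-1)` in a (possibly noncommutative) ring. -/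
def oprod {t : ℕ} (f : Fin t → A) : A := ((List.finRange t).map f).prod

/-- The sign `(−q)_σ = (−1)^{ℓ(σ)} ∏_{i<j, σ(i)>σ(j)} q_{σ(j)σ(i)}`. -/
def qSign {N : ℕ} (q : Fin N → Fin N → K) (σ : Equiv.Perm (Fin N)) : K :=
  ∏ x ∈ Finset.univ.filter
      (fun x : Fin N × Fin N => x.1 < x.2 ∧ σ x.2 < σ x.1),
    (-q (σ x.2) (σ x.1))

/-- The quantum determinant `det_q(T) = Σ_σ (−q)_σ t_{1σ(1)} ⋯ t_{Nσ(N)}`. -/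
def qdet {N : ℕ} (q : Fin N → Fin N → K) (T : Matrix (Fin N) (Fin N) A) : A :=
  ∑ σ : Equiv.Perm (Fin N), qSign q σ • oprod (fun i => T i (σ i))

/-- The quantum minor with row indices `r` and column indices `c`. -/
def qminor {N t : ℕ} (q : Fin N → Fin N → K) (T : Matrix (Fin N) (Fin N) A)
    (r c : Fin t → Fin N) : A :=
  ∑ σ : Equiv.Perm (Fin t),
    qSign (fun a b => q (c a) (c b)) σ • oprod (fun a => T (r a) (c (σ a)))

/-!
The relation `q_{kl} t_{il} t_{jk} = p_{ij} t_{jk} t_{il}` says that the row- and column-minors of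
size `2` agree, because they share the diagonal term. A larger row-minor is expanded along its first
row, and every resulting minor that still meets the first column is, by induction, expanded along
that column. Besides the corner term this gives a sum over pairs `(i, k)` of multiples of
`t_{1k} t_{i1}` times a minor avoiding both rows and both columns. The column-minor gives the same
sum with `t_{i1} t_{1k}` in place of `t_{1k} t_{i1}`, and the relation matches the two term by term.
-/

section Minors

open scoped Matrix

variable {R ι : Type*} [CommRing R] {N n t : ℕ}

/-- The permutation with `0 ↦ k` whose values at `1, …, n` enumerate the complement of `{k}` in the
order given by `τ`. It indexes the terms of column `k` in the expansion of a quantum determinant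
along its first row. -/
def consPerm (k : Fin (n + 1)) (τ : Equiv.Perm (Fin n)) : Equiv.Perm (Fin (n + 1)) :=
  (Equiv.Perm.decomposeFin.symm (0, τ)).trans k.cycleRange.symm

@[simp]
theorem consPerm_zero (k : Fin (n + 1)) (τ : Equiv.Perm (Fin n)) :
    consPerm k τ 0 = k := by
  simp [consPerm]

@[simp]
theorem consPerm_succ (k : Fin (n + 1)) (τ : Equiv.Perm (Fin n)) (i : Fin n) :
    consPerm k τ i.succ = k.succAbove (τ i) := by
  simp [consPerm]

theorem consPerm_bijective (n : ℕ) :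
    Function.Bijective fun x : Fin (n + 1) × Equiv.Perm (Fin n) => consPerm x.1 x.2 := by
  rw [Fintype.bijective_iff_injective_and_card]
  refine ⟨?_, by simp [Fintype.card_perm, Nat.factorial_succ]⟩
  rintro ⟨k, τ⟩ ⟨l, ρ⟩ h
  obtain rfl : k = l := by simpa using DFunLike.congr_fun h 0
  obtain rfl : τ = ρ := Equiv.ext fun i => by simpa using DFunLike.congr_fun h i.succ
  rfl

/-- The coefficient `∏_{j < k} (-q_{c(j) c(k)})` of the term of column `c(k)` in the Laplace
expansion along the first row of a quantum minor with columns `c`. -/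
def laplaceSign (q : ι → ι → R) (c : Fin t → ι) (k : Fin t) : R :=
  ∏ j ∈ Iio k, -q (c j) (c k)

@[simp]
theorem laplaceSign_zero (q : ι → ι → R) (c : Fin (t + 1) → ι) :
    laplaceSign q c 0 = 1 := by
  rw [laplaceSign, ← bot_eq_zero, Iio_bot, prod_empty]

theorem laplaceSign_succ (q : ι → ι → R) (c : Fin (t + 1) → ι) (k : Fin t) :
    laplaceSign q c k.succ = -q (c 0) (c k.succ) * laplaceSign q (c ∘ Fin.succ) k := by
  simp only [laplaceSign, ← filter_gt_eq_Iio, prod_filter, Fin.prod_univ_succ, Fin.succ_pos,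
    if_true, Fin.succ_lt_succ_iff, Function.comp_apply]

theorem laplaceSign_succ_mul_smul_eq {κ E : Type*} [AddCommMonoid E] [Module R E]
    (p : κ → κ → R) (q : ι → ι → R) (r : Fin (n + 1) → κ) (c : Fin (t + 1) → ι)
    (i : Fin n) (k : Fin t) {x y : E}
    (h : q (c 0) (c k.succ) • x = p (r 0) (r i.succ) • y) :
    (laplaceSign q c k.succ * laplaceSign p (r ∘ Fin.succ) i) • x =
      (laplaceSign p r i.succ * laplaceSign q (c ∘ Fin.succ) k) • y := by
  rw [laplaceSign_succ, laplaceSign_succ]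
  generalize laplaceSign q (c ∘ Fin.succ) k = a, laplaceSign p (r ∘ Fin.succ) i = b
  calc (-q (c 0) (c k.succ) * a * b) • x
      = (-(a * b)) • q (c 0) (c k.succ) • x := by rw [smul_smul]; ring_nf
    _ = (-(a * b)) • p (r 0) (r i.succ) • y := by rw [h]
    _ = (-p (r 0) (r i.succ) * b * a) • y := by rw [smul_smul]; ring_nf

theorem qSign_eq_prod_prod (q : Fin n → Fin n → K) (σ : Equiv.Perm (Fin n)) :
    qSign q σ = ∏ i, ∏ j, if i < j ∧ σ j < σ i then -q (σ j) (σ i) else 1 := by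
  rw [qSign, prod_filter, ← univ_product_univ, prod_product]

theorem qSign_consPerm (q : ι → ι → K) (c : Fin (n + 1) → ι) (k : Fin (n + 1))
    (τ : Equiv.Perm (Fin n)) :
    qSign (fun a b => q (c a) (c b)) (consPerm k τ) =
      laplaceSign q c k *
        qSign (fun a b => q (c (k.succAbove a)) (c (k.succAbove b))) τ := by
  rw [qSign_eq_prod_prod, qSign_eq_prod_prod, Fin.prod_univ_succ]
  congr 1
  · rw [laplaceSign, ← filter_gt_eq_Iio, prod_filter, Fin.prod_univ_succ,
      Fin.prod_univ_succAbove _ k]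
    simpa using
      Equiv.prod_comp τ fun j => if k.succAbove j < k then -q (c (k.succAbove j)) (c k) else 1
  · simp [Fin.prod_univ_succ]

theorem oprod_succ (f : Fin (n + 1) → A) :
    oprod f = f 0 * oprod fun i => f i.succ := by
  simp [oprod, List.finRange_succ, Function.comp_def]

theorem qminor_eq_sum_row_zero (q : Fin N → Fin N → K) (T : Matrix (Fin N) (Fin N) A)
    (r c : Fin (t + 1) → Fin N) :
    qminor q T r c = ∑ k, laplaceSign q c k •
      (T (r 0) (c k) * qminor q T (r ∘ Fin.succ) (c ∘ k.succAbove)) := by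
  rw [qminor, ← (consPerm_bijective t).sum_comp, Fintype.sum_prod_type]
  simp only [qminor, mul_sum, smul_sum, mul_smul_comm, smul_smul, qSign_consPerm, oprod_succ,
    consPerm_zero, consPerm_succ, Function.comp_apply]

theorem qminor_eq_sum_row_zero_col_zero (p q : Fin N → Fin N → K) (T : Matrix (Fin N) (Fin N) A)
    (r c : Fin (t + 2) → Fin N)
    (h : ∀ k : Fin (t + 1), qminor q T (r ∘ Fin.succ) (c ∘ k.succ.succAbove) =
      qminor p Tᵀ (c ∘ k.succ.succAbove) (r ∘ Fin.succ)) :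
    qminor q T r c = T (r 0) (c 0) * qminor q T (r ∘ Fin.succ) (c ∘ Fin.succ) +
      ∑ k : Fin (t + 1), ∑ i : Fin (t + 1),
        (laplaceSign q c k.succ * laplaceSign p (r ∘ Fin.succ) i) •
          (T (r 0) (c k.succ) * T (r i.succ) (c 0) *
            qminor p Tᵀ (c ∘ Fin.succ ∘ k.succAbove) (r ∘ Fin.succ ∘ i.succAbove)) := by
  have succAbove_comp_succ (k : Fin (t + 1)) :
      k.succ.succAbove ∘ Fin.succ = Fin.succ ∘ k.succAbove :=
    funext fun j => Fin.succ_succAbove_succ k j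
  rw [qminor_eq_sum_row_zero, Fin.sum_univ_succ]
  congr 1
  · simp only [laplaceSign_zero, one_smul, Fin.succAbove_zero]
  · simp only [h, qminor_eq_sum_row_zero p, Matrix.transpose_apply, Function.comp_apply,
      Function.comp_assoc, succAbove_comp_succ, Fin.succ_succAbove_zero, mul_sum, smul_sum,
      mul_smul_comm, smul_smul, mul_assoc]

theorem rdet_eq_cdet_general (p q : Fin N → Fin N → K) (T : Matrix (Fin N) (Fin N) A)
    (h_cross : ∀ i j k l : Fin N, i < j → k < l →
      q k l • (T i l * T j k) = p i j • (T j k * T i l))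
    {r c : Fin t → Fin N} (hr : StrictMono r) (hc : StrictMono c) :
    qminor q T r c = qminor p Tᵀ c r := by
  induction t using Nat.twoStepInduction with
  | zero => simp [qminor, qSign, oprod]
  | one => simp [qminor, qSign, oprod, Subsingleton.elim _ (0 : Fin 1)]
  | more t ih_t ih_succ =>
    have hr' : StrictMono (r ∘ Fin.succ) := hr.comp Fin.strictMono_succ
    have hc' : StrictMono (c ∘ Fin.succ) := hc.comp Fin.strictMono_succ
    rw [qminor_eq_sum_row_zero_col_zero p q T r c fun k =>
        ih_succ hr' (hc.comp k.succ.strictMono_succAbove),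
      qminor_eq_sum_row_zero_col_zero q p Tᵀ c r fun i =>
        (ih_succ (hr.comp i.succ.strictMono_succAbove) hc').symm,
      ih_succ hr' hc', sum_comm]
    congr 1
    refine sum_congr rfl fun i _ => sum_congr rfl fun k _ => ?_
    have minor_eq : qminor q T (r ∘ Fin.succ ∘ i.succAbove) (c ∘ Fin.succ ∘ k.succAbove) =
        qminor p Tᵀ (c ∘ Fin.succ ∘ k.succAbove) (r ∘ Fin.succ ∘ i.succAbove) :=
      ih_t (hr'.comp i.strictMono_succAbove) (hc'.comp k.strictMono_succAbove)
    have swap (M : A) : q (c 0) (c k.succ) • (T (r 0) (c k.succ) * T (r i.succ) (c 0) * M) =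
        p (r 0) (r i.succ) • (T (r i.succ) (c 0) * T (r 0) (c k.succ) * M) := by
      simpa only [smul_mul_assoc] using
        congrArg (· * M) (h_cross _ _ _ _ (hr i.succ_pos) (hc k.succ_pos))
    rw [Matrix.transpose_transpose, minor_eq]
    exact laplaceSign_succ_mul_smul_eq p q r c i k (swap _)

end Minors

/-- for a `(p,u)`-matrix the quantum row-determinant equals
the quantum column-determinant. -/
theorem rdet_eq_cdet {n : ℕ} (p q : Fin n → Fin n → K) (u : K)
    (hpu : PUCondition p q u) (T : Matrix (Fin n) (Fin n) A)
    (hT : IsPUMatrix p q u T) :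
    (∑ σ : Equiv.Perm (Fin n), qSign q σ • oprod (fun i => T i (σ i)))
      = ∑ σ : Equiv.Perm (Fin n), qSign p σ • oprod (fun i => T (σ i) i) :=
  rdet_eq_cdet_general p q T (fun i j k l hij hkl => (hT i j k l hij hkl).2.2.1)
    strictMono_id strictMono_id
end

section
/- (Column Laplace expansion) Let T be an n×n (p,u)-matrix over a K-algebra A and fix an r-shuffle τ ∈ S_n, i.e. τ(1) < ⋯ < τ(r) and τ(r+1) < ⋯ < τ(n). Then det_q(T) = Σ_β ((−p)_β / (−p)_τ) · det_q(T^{β(1)…β(r)}_{τ(1)…τ(r)}) · det_q(T^{β(r+1)…β(n)}_{τ(r+1)…τ(n)}), where the sum runs over all r-shuffles β ∈ S_n with β(1) < ⋯ < β(r) and β(r+1) < ⋯ < β(n). -/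
open Finset

variable {K : Type*} [Field K] {A : Type*} [Ring A] [Algebra K A]

/-!
Reordering the factors of a monomial of a quantum minor by columns instead of rows interchanges
exactly the pairs of factors that form an inversion. These are antidiagonal pairs, and their
commutation relations turn the coefficient `(−q)_σ` into `(−p)_{σ⁻¹}`. In the resulting
column-ordered sum the rows are permuted, and for an adjacent transposition `s` Manin's cross
relations pair the terms of `σ` and `σ s`; hence permuting the columns by `τ` multiplies the sum by
`(−p)_τ`. Finally, a permutation of the rows is uniquely a shuffle times an element of the Young
subgroup `S_r × S_{n-r}`, and `(−p)` factors accordingly, so that the column-ordered determinant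
of the matrix with columns permuted by `τ` is a sum of products of complementary minors.
-/

open Equiv Function

section AdjacentTranspositions

theorem swap_lt_swap_iff_of_covBy {α : Type*} [LinearOrder α] {i j a b : α} (hij : i ⋖ j)
    (h : s(a, b) ≠ s(i, j)) : swap i j a < swap i j b ↔ a < b := by
  have le_i {c : α} (hc : c < j) : c ≤ i := hij.le_of_lt hc
  have j_le {c : α} (hc : i < c) : j ≤ c := hij.ge_of_gt hc
  simp only [swap_apply_def]
  grind [hij.lt]

variable {n : ℕ}

theorem exists_covBy_apply_lt {σ : Perm (Fin n)} (hσ : σ ≠ 1) : ∃ i j, i ⋖ j ∧ σ j < σ i := by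
  contrapose! hσ
  have hmono : StrictMono σ :=
    ((monotone_iff_forall_covBy σ).2 hσ).strictMono_of_injective σ.injective
  exact Perm.ext <| congrFun <| (hmono.range_inj strictMono_id).1 <| by simp

@[elab_as_elim]
theorem perm_induction_covBy {P : Perm (Fin n) → Prop} (σ : Perm (Fin n)) (one : P 1)
    (mul_swap : ∀ (σ : Perm (Fin n)) (i j : Fin n),
      i ⋖ j → σ i < σ j → P σ → P (σ * swap i j)) : P σ := by
  induction hf : toLex ⇑σ using WellFoundedLT.induction generalizing σ with | _ f ih
  subst hf
  obtain rfl | hσ := eq_or_ne σ 1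
  · exact one
  obtain ⟨i, j, hij, hlt⟩ := exists_covBy_apply_lt hσ
  -- Undoing a descent lowers the sequence of values lexicographically.
  have hP : P (σ * swap i j) := ih _ (Pi.lex_desc hij.le hlt) _ rfl
  simpa [mul_assoc] using mul_swap (σ * swap i j) i j hij (by simpa using hlt) hP

end AdjacentTranspositions

section QSign

variable {n : ℕ} (p : Fin n → Fin n → K)

theorem qSign_one : qSign p 1 = 1 := by
  refine prod_eq_one fun x hx => ?_
  rw [mem_filter] at hx
  exact absurd hx.2.1 hx.2.2.not_gt

theorem qSign_eq_qSign_inv (σ : Perm (Fin n)) :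
    qSign p σ = qSign (fun a b => p (σ b) (σ a)) σ⁻¹ := by
  unfold qSign
  refine prod_equiv ((Equiv.prodComm _ _).trans (σ.prodCongr σ)) ?_ ?_ <;> simp [and_comm]

variable {p} in
theorem qSign_ne_zero (hp : ∀ i j, p i j * p j i = 1) (σ : Perm (Fin n)) : qSign p σ ≠ 0 :=
  prod_ne_zero_iff.2 fun _ _ => neg_ne_zero.2 (left_ne_zero_of_mul_eq_one (hp _ _))

theorem qSign_mul_swap_of_lt {σ : Perm (Fin n)} {i j : Fin n} (hij : i ⋖ j) (h : σ i < σ j) :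
    qSign p (σ * swap i j) = -p (σ i) (σ j) * qSign p σ := by
  have inversions_eq : ({x | x.1 < x.2 ∧ (σ * swap i j) x.2 < (σ * swap i j) x.1} :
        Finset (Fin n × Fin n)) =
      insert (i, j) (({x | x.1 < x.2 ∧ σ x.2 < σ x.1} : Finset (Fin n × Fin n)).map
        ((swap i j).prodCongr (swap i j)).toEmbedding) := by
    ext ⟨a, b⟩
    rw [mem_insert, mem_map_equiv, mem_filter, mem_filter]
    by_cases hab : s(a, b) = s(i, j)
    · obtain ⟨rfl, rfl⟩ | ⟨rfl, rfl⟩ := Sym2.eq_iff.1 hab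
      · simp [hij.lt, h]
      · simp [hij.lt.not_gt, hij.lt.ne', h.not_gt]
    · have hne : (a, b) ≠ (i, j) := by rintro ⟨⟩; exact hab rfl
      simp [hne, swap_lt_swap_iff_of_covBy hij hab]
  unfold qSign
  have hnotMem : (i, j) ∉ (({x | x.1 < x.2 ∧ σ x.2 < σ x.1} : Finset (Fin n × Fin n)).map
      ((swap i j).prodCongr (swap i j)).toEmbedding) := by
    rw [mem_map_equiv, mem_filter]
    simp [hij.lt.not_gt]
  rw [inversions_eq, prod_insert hnotMem, prod_map]
  simp

variable {p} in
theorem qSign_mul_swap (hp : ∀ i j, p i j * p j i = 1) (σ : Perm (Fin n)) {i j : Fin n}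
    (hij : i ⋖ j) : qSign p (σ * swap i j) = -p (σ i) (σ j) * qSign p σ := by
  obtain h | h := (σ.injective.ne hij.ne).lt_or_gt
  · exact qSign_mul_swap_of_lt p hij h
  · have := qSign_mul_swap_of_lt p (σ := σ * swap i j) hij (by simpa using h)
    simp only [mul_assoc, swap_mul_self, mul_one, Perm.mul_apply, swap_apply_left,
      swap_apply_right] at this
    rw [this, ← mul_assoc, neg_mul_neg, hp, one_mul]

end QSign

section OrderedProducts

theorem oprod_add {r m : ℕ} (f : Fin (r + m) → A) :
    oprod f = oprod (f ∘ Fin.castAdd m) * oprod (f ∘ Fin.natAdd r) := by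
  simp only [oprod, ← List.ofFn_eq_map, List.ofFn_add, List.prod_append]
  rfl

theorem exists_oprod_eq_mul_mul {n : ℕ} {i j : Fin n} (hij : i ⋖ j) (f : Fin n → A) :
    ∃ l r : A, ∀ g : Fin n → A, (∀ a, a ≠ i → a ≠ j → g a = f a) →
      oprod g = l * (g i * g j) * r := by
  have hj : (j : ℕ) = i + 1 := by simpa [eq_comm] using hij
  obtain ⟨s, t, hst⟩ : ∃ s t, List.finRange n = s ++ i :: j :: t := by
    refine ⟨(List.finRange n).take i, (List.finRange n).drop (i + 2), ?_⟩
    conv_lhs => rw [← List.take_append_drop i (List.finRange n)]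
    rw [List.drop_eq_getElem_cons (by simp), List.drop_eq_getElem_cons (by simp; omega)]
    simp [Fin.ext_iff, hj]
  have hnodup := hst ▸ List.nodup_finRange n
  refine ⟨(s.map f).prod, (t.map f).prod, fun g hg => ?_⟩
  have hs : s.map g = s.map f := List.map_congr_left fun a ha => by grind
  have ht : t.map g = t.map f := List.map_congr_left fun a ha => by grind
  simp [oprod, hst, hs, ht, mul_assoc]

theorem qSign_smul_oprod_comp_perm {n : ℕ} (c d : Fin n → Fin n → K) (x : Fin n → A)
    (π : Perm (Fin n))
    (h : ∀ a b, a < b → π b < π a →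
      c (π b) (π a) • (x (π b) * x (π a)) = d (π b) (π a) • (x (π a) * x (π b))) :
    qSign c π • oprod x = qSign d π • oprod (x ∘ π) := by
  induction π using perm_induction_covBy with
  | one => simp [qSign_one]
  | mul_swap π i j hij hlt ih =>
    specialize ih fun a b hab hπ => by
      have hne : s(a, b) ≠ s(i, j) := by
        rintro e
        obtain ⟨rfl, rfl⟩ | ⟨rfl, rfl⟩ := Sym2.eq_iff.1 e
        exacts [hlt.not_gt hπ, hij.lt.not_gt hab]
      simpa [hπ] using
        h (swap i j a) (swap i j b) ((swap_lt_swap_iff_of_covBy hij hne).2 hab)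
    have hcomm := h i j hij.lt (by simpa using hlt)
    simp only [Perm.mul_apply, swap_apply_left, swap_apply_right] at hcomm
    obtain ⟨l, r, hlr⟩ := exists_oprod_eq_mul_mul hij (x ∘ π)
    have hswap : c (π i) (π j) • oprod (x ∘ π) =
        d (π i) (π j) • oprod (x ∘ ⇑(π * swap i j)) := by
      rw [hlr _ fun _ _ _ => rfl,
        hlr (x ∘ ⇑(π * swap i j)) fun a hi hj => by simp [swap_apply_of_ne_of_ne hi hj]]
      simpa using congr(l * $hcomm * r)
    rw [qSign_mul_swap_of_lt c hij hlt, qSign_mul_swap_of_lt d hij hlt, mul_smul, ih,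
      smul_comm, neg_smul, hswap, mul_comm, mul_smul, neg_smul]

end OrderedProducts

section ColumnDeterminant

/-- The column-ordered quantum determinant `∑_σ (−p)_σ t_{σ(1)1} ⋯ t_{σ(N)N}`: the factors are
ordered by their column, and the rows are permuted. -/
def colDet {n : ℕ} (p : Fin n → Fin n → K) (T : Matrix (Fin n) (Fin n) A) : A :=
  ∑ σ : Perm (Fin n), qSign p σ • oprod fun a => T (σ a) a

/-- The relations of a `(p,u)`-matrix between the antidiagonal entries `t_{il}`, `t_{jk}` of each
`2 × 2` submatrix, with row parameters `p` and column parameters `q`. -/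
def AntidiagonalRelations {n : ℕ} (p q : Fin n → Fin n → K) (T : Matrix (Fin n) (Fin n) A) :
    Prop :=
  ∀ ⦃i j k l⦄, i < j → k < l → q k l • (T i l * T j k) = p i j • (T j k * T i l)

/-- The multiparameter form of Manin's cross relations `[t_{ik}, t_{jl}] = [t_{jk}, t_{il}]`, with
row parameters `p` and column parameters `p'`. All four products are written on one side, which
makes the relations symmetric in the two rows and in the two columns. -/
def CrossRelations {n : ℕ} (p p' : Fin n → Fin n → K) (T : Matrix (Fin n) (Fin n) A) : Prop :=
  ∀ ⦃i j k l⦄, i ≠ j → k ≠ l →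
    T i l * T j k - p i j • (T j l * T i k) +
      p' k l • (T i k * T j l - p i j • (T j k * T i l)) = 0

variable {n t : ℕ} {p p' q : Fin n → Fin n → K} {T : Matrix (Fin n) (Fin n) A}

theorem AntidiagonalRelations.submatrix (hT : AntidiagonalRelations p q T) {R C : Fin t → Fin n}
    (hR : StrictMono R) (hC : StrictMono C) :
    AntidiagonalRelations (p on R) (q on C) (T.submatrix R C) :=
  fun _ _ _ _ hij hkl => hT (hR hij) (hC hkl)

theorem CrossRelations.submatrix (hT : CrossRelations p p' T) {R C : Fin t → Fin n}
    (hR : Injective R) (hC : Injective C) :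
    CrossRelations (p on R) (p' on C) (T.submatrix R C) :=
  fun _ _ _ _ hij hkl => hT (hR.ne hij) (hC.ne hkl)

theorem CrossRelations.of_lt (hp : ∀ i j, p i j * p j i = 1) (hp' : ∀ i j, p' i j * p' j i = 1)
    (h : ∀ ⦃i j k l⦄, i < j → k < l →
      T i l * T j k - p i j • (T j l * T i k) +
        p' k l • (T i k * T j l - p i j • (T j k * T i l)) = 0) :
    CrossRelations p p' T := by
  have of_lt_row {i j k l} (hij : i < j) (hkl : k ≠ l) :
      T i l * T j k - p i j • (T j l * T i k) +
        p' k l • (T i k * T j l - p i j • (T j k * T i l)) = 0 := by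
    obtain hkl | hlk := hkl.lt_or_gt
    · exact h hij hkl
    · have := congr(p' k l • $(h hij hlk))
      rwa [smul_add, smul_smul, hp', one_smul, smul_zero, add_comm] at this
  intro i j k l hij hkl
  obtain hij | hji := hij.lt_or_gt
  · exact of_lt_row hij hkl
  · calc
      _ = -p i j • (T j l * T i k - p j i • (T i l * T j k) +
            p' k l • (T j k * T i l - p j i • (T i k * T j l))) := by
        have := hp i j
        match_scalars <;> grind
      _ = 0 := by rw [of_lt_row hji hkl, smul_zero]

theorem qdet_eq_colDet (hT : AntidiagonalRelations p q T) : qdet q T = colDet p T := by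
  refine Fintype.sum_equiv (Equiv.inv _) _ _ fun σ => ?_
  rw [qSign_eq_qSign_inv]
  simpa [comp_def] using qSign_smul_oprod_comp_perm (fun a b => q (σ b) (σ a)) p
    (fun a => T a (σ a)) σ⁻¹ fun a b hab hσ => by simpa using hT hσ hab

theorem qminor_eq_colDet (hT : AntidiagonalRelations p q T) {R C : Fin t → Fin n}
    (hR : StrictMono R) (hC : StrictMono C) :
    qminor q T R C = colDet (p on R) (T.submatrix R C) :=
  qdet_eq_colDet (hT.submatrix hR hC)

theorem colDet_submatrix_swap (hp : ∀ i j, p i j * p j i = 1) (hT : CrossRelations p p' T)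
    {i j : Fin n} (hij : i ⋖ j) :
    colDet p (T.submatrix id (swap i j)) = -p' i j • colDet p T := by
  rw [← sub_eq_zero, neg_smul, sub_neg_eq_add]
  unfold colDet
  rw [smul_sum, ← sum_add_distrib]
  -- The cross relation in rows `σ i`, `σ j` makes the terms of `σ` and `σ * swap i j` cancel.
  refine sum_involution (fun σ _ => σ * swap i j) (fun σ _ => ?_)
    (fun σ _ _ h => hij.ne (swap_eq_one_iff.1 (mul_eq_left.1 h))) (by simp) (by simp [mul_assoc])
  obtain ⟨l, r, hlr⟩ := exists_oprod_eq_mul_mul hij fun a => T (σ a) a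
  have hoff {a : Fin n} (hi : a ≠ i) (hj : a ≠ j) : swap i j a = a := swap_apply_of_ne_of_ne hi hj
  rw [hlr _ fun _ _ _ => rfl,
    hlr (fun a => T.submatrix id (swap i j) (σ a) a) fun a hi hj => by simp [hoff hi hj],
    hlr (fun a => T.submatrix id (swap i j) ((σ * swap i j) a) a) fun a hi hj => by
      simp [hoff hi hj],
    hlr (fun a => T ((σ * swap i j) a) a) fun a hi hj => by simp [hoff hi hj],
    qSign_mul_swap hp σ hij]
  have hrel := congr(qSign p σ • (l * $(hT (σ.injective.ne hij.ne) hij.ne) * r))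
  simp only [Matrix.submatrix_apply, id_eq, Perm.mul_apply, swap_apply_left, swap_apply_right]
  simp only [mul_add, add_mul, mul_sub, sub_mul, smul_add, smul_sub, mul_smul_comm, smul_mul_assoc,
    smul_smul, mul_zero, zero_mul, smul_zero] at hrel
  rw [← hrel]
  module

theorem colDet_submatrix_perm (hp : ∀ i j, p i j * p j i = 1) (hT : CrossRelations p p' T)
    (τ : Perm (Fin n)) : colDet p (T.submatrix id τ) = qSign p' τ • colDet p T := by
  induction τ using perm_induction_covBy with
  | one => simp [qSign_one]
  | mul_swap τ i j hij hlt ih =>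
    calc colDet p (T.submatrix id ⇑(τ * swap i j))
        = colDet p ((T.submatrix id τ).submatrix id (swap i j)) := rfl
      _ = -p' (τ i) (τ j) • colDet p (T.submatrix id τ) :=
          colDet_submatrix_swap hp (hT.submatrix injective_id τ.injective) hij
      _ = qSign p' (τ * swap i j) • colDet p T := by
          rw [ih, smul_smul, qSign_mul_swap_of_lt p' hij hlt]

end ColumnDeterminant

section Shuffles

/-- `β` is an `r`-shuffle: it is increasing on the first `r` positions and on the remaining ones. -/
abbrev IsShuffle {n : ℕ} (r : ℕ) (β : Perm (Fin n)) : Prop :=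
  ∀ a b : Fin n, a < b → ((b : ℕ) < r ∨ r ≤ (a : ℕ)) → β a < β b

/-- The Young subgroup `S_r × S_m` of `S_{r+m}`: the permutations `s` of the first `r` positions
and `t` of the last `m` positions act independently. -/
def blockPerm (r m : ℕ) : Perm (Fin r) × Perm (Fin m) →* Perm (Fin (r + m)) :=
  finSumFinEquiv.permCongrHom.toMonoidHom.comp (Perm.sumCongrHom _ _)

variable {r m : ℕ}

@[simp]
theorem blockPerm_castAdd (x : Perm (Fin r) × Perm (Fin m)) (a : Fin r) :
    blockPerm r m x (Fin.castAdd m a) = Fin.castAdd m (x.1 a) := by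
  simp [blockPerm, permCongr_apply]

@[simp]
theorem blockPerm_natAdd (x : Perm (Fin r) × Perm (Fin m)) (b : Fin m) :
    blockPerm r m x (Fin.natAdd r b) = Fin.natAdd r (x.2 b) := by
  simp [blockPerm, permCongr_apply]

theorem blockPerm_swap_one (i j : Fin r) :
    blockPerm r m (swap i j, 1) = swap (Fin.castAdd m i) (Fin.castAdd m j) := by
  simp [blockPerm, permCongr_def]

theorem blockPerm_one_swap (i j : Fin m) :
    blockPerm r m (1, swap i j) = swap (Fin.natAdd r i) (Fin.natAdd r j) := by
  simp [blockPerm, permCongr_def]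

theorem isShuffle_iff {β : Perm (Fin (r + m))} :
    IsShuffle r β ↔ StrictMono (β ∘ Fin.castAdd m) ∧ StrictMono (β ∘ Fin.natAdd r) := by
  refine ⟨fun h => ⟨fun a b hab => h _ _ (by simpa) (.inl (by simp)),
    fun a b hab => h _ _ (by simpa) (.inr (by simp))⟩, fun ⟨hl, hr⟩ a b hab h => ?_⟩
  induction a using Fin.addCases <;> induction b using Fin.addCases
  · exact hl ((Fin.strictMono_castAdd m).lt_iff_lt.1 hab)
  · grind
  · grind
  · exact hr (by simpa using hab)

theorem strictMono_comp_perm_iff_eq_sort {α : Type*} [LinearOrder α] {n : ℕ} {f : Fin n → α}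
    (hf : Injective f) {σ : Perm (Fin n)} : StrictMono (f ∘ σ) ↔ σ = Tuple.sort f := by
  rw [Tuple.eq_sort_iff]
  exact ⟨fun h => ⟨h.monotone, fun i j hij heq => absurd heq (h hij).ne⟩,
    fun h => h.1.strictMono_of_injective (hf.comp σ.injective)⟩

theorem isShuffle_mul_blockPerm_iff {σ : Perm (Fin (r + m))} {x : Perm (Fin r) × Perm (Fin m)} :
    IsShuffle r (σ * blockPerm r m x) ↔
      x = (Tuple.sort (σ ∘ Fin.castAdd m), Tuple.sort (σ ∘ Fin.natAdd r)) := by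
  rw [isShuffle_iff, Prod.ext_iff,
    ← strictMono_comp_perm_iff_eq_sort (σ.injective.comp (Fin.castAdd_injective r m)),
    ← strictMono_comp_perm_iff_eq_sort (σ.injective.comp (Fin.natAdd_injective m r))]
  simp [comp_def]

theorem sum_perm_eq_sum_isShuffle {M : Type*} [AddCommMonoid M] (f : Perm (Fin (r + m)) → M) :
    ∑ σ, f σ = ∑ β with IsShuffle r β, ∑ x, f (β * blockPerm r m x) := by
  symm
  calc ∑ β with IsShuffle r β, ∑ x, f (β * blockPerm r m x)
      = ∑ x, ∑ β, if IsShuffle r β then f (β * blockPerm r m x) else 0 := by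
        rw [sum_comm]
        exact sum_congr rfl fun x _ => sum_filter _ _
    _ = ∑ x, ∑ σ, if IsShuffle r (σ * blockPerm r m x) then f σ else 0 := by
        refine Fintype.sum_equiv (Equiv.inv _) _ _ fun x => ?_
        refine Fintype.sum_equiv (Equiv.mulRight (blockPerm r m x)) _ _ fun β => ?_
        simp [mul_assoc]
    _ = ∑ σ, f σ := by
        rw [sum_comm]
        simp [isShuffle_mul_blockPerm_iff]

theorem qSign_mul_blockPerm (p : Fin (r + m) → Fin (r + m) → K) {β : Perm (Fin (r + m))}
    (hβ : IsShuffle r β) (s : Perm (Fin r)) (t : Perm (Fin m)) :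
    qSign p (β * blockPerm r m (s, t)) =
      qSign p β * qSign (p on β ∘ Fin.castAdd m) s * qSign (p on β ∘ Fin.natAdd r) t := by
  obtain ⟨hl, hr⟩ := isShuffle_iff.1 hβ
  induction t using perm_induction_covBy with
  | one =>
    induction s using perm_induction_covBy with
    | one => simp [qSign_one, ← Prod.one_eq_mk]
    | mul_swap s i j hij hlt ih =>
      have hsplit : β * blockPerm r m (s * swap i j, 1) =
          β * blockPerm r m (s, 1) * swap (Fin.castAdd m i) (Fin.castAdd m j) := by
        rw [← blockPerm_swap_one, mul_assoc, ← map_mul, Prod.mk_mul_mk, mul_one]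
      rw [hsplit, qSign_mul_swap_of_lt p (by simpa using hij) (by simpa using hl hlt), ih,
        qSign_mul_swap_of_lt _ hij hlt]
      simp only [Perm.mul_apply, blockPerm_castAdd, onFun, comp_apply]
      ring
  | mul_swap t i j hij hlt ih =>
    have hsplit : β * blockPerm r m (s, t * swap i j) =
        β * blockPerm r m (s, t) * swap (Fin.natAdd r i) (Fin.natAdd r j) := by
      rw [← blockPerm_one_swap, mul_assoc, ← map_mul, Prod.mk_mul_mk, mul_one]
    rw [hsplit, qSign_mul_swap_of_lt p (by simpa [add_assoc] using hij) (by simpa using hr hlt), ih,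
      qSign_mul_swap_of_lt _ hij hlt]
    simp only [Perm.mul_apply, blockPerm_natAdd, onFun, comp_apply]
    ring

end Shuffles

section LaplaceExpansion

theorem colDet_eq_sum_isShuffle {r m : ℕ} (p : Fin (r + m) → Fin (r + m) → K)
    (T : Matrix (Fin (r + m)) (Fin (r + m)) A) :
    colDet p T = ∑ β with IsShuffle r β, qSign p β •
      (colDet (p on β ∘ Fin.castAdd m) (T.submatrix (β ∘ Fin.castAdd m) (Fin.castAdd m)) *
        colDet (p on β ∘ Fin.natAdd r) (T.submatrix (β ∘ Fin.natAdd r) (Fin.natAdd r))) := by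
  rw [colDet, sum_perm_eq_sum_isShuffle]
  refine sum_congr rfl fun β hβ => ?_
  rw [colDet, colDet, sum_mul_sum, smul_sum, Fintype.sum_prod_type]
  refine sum_congr rfl fun s _ => ?_
  rw [smul_sum]
  refine sum_congr rfl fun t _ => ?_
  rw [qSign_mul_blockPerm p (mem_filter.1 hβ).2, oprod_add, smul_mul_smul_comm, smul_smul,
    mul_assoc]
  simp [comp_def]

theorem qdet_laplace_col_general {n r m : ℕ} (h : r + m = n) {p p' q : Fin n → Fin n → K}
    (hp : ∀ i j, p i j * p j i = 1) (hp' : ∀ i j, p' i j * p' j i = 1)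
    {T : Matrix (Fin n) (Fin n) A} (hanti : AntidiagonalRelations p q T)
    (hcross : CrossRelations p p' T) {τ : Perm (Fin n)} (hτ : IsShuffle r τ) :
    qdet q T = ∑ β with IsShuffle r β, ((qSign p' τ)⁻¹ * qSign p β) •
      (qminor q T (fun a : Fin r => β (Fin.cast h (Fin.castAdd m a)))
          (fun a => τ (Fin.cast h (Fin.castAdd m a))) *
        qminor q T (fun b : Fin m => β (Fin.cast h (Fin.natAdd r b)))
          (fun b => τ (Fin.cast h (Fin.natAdd r b)))) := by
  subst h
  have hcol : qdet q T = (qSign p' τ)⁻¹ • colDet p (T.submatrix id τ) := by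
    rw [colDet_submatrix_perm hp hcross, inv_smul_smul₀ (qSign_ne_zero hp' τ),
      qdet_eq_colDet hanti]
  obtain ⟨hτl, hτr⟩ := isShuffle_iff.1 hτ
  rw [hcol, colDet_eq_sum_isShuffle, smul_sum]
  refine sum_congr rfl fun β hβ => ?_
  obtain ⟨hβl, hβr⟩ := isShuffle_iff.1 (mem_filter.1 hβ).2
  rw [mul_smul]
  exact congr((qSign p' τ)⁻¹ • qSign p β • ($((qminor_eq_colDet hanti hβl hτl).symm) *
    $((qminor_eq_colDet hanti hβr hτr).symm)))

variable {n : ℕ} {p q : Fin n → Fin n → K} {u : K} {T : Matrix (Fin n) (Fin n) A}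

theorem IsPUMatrix.antidiagonalRelations (hT : IsPUMatrix p q u T) :
    AntidiagonalRelations p q T :=
  fun i j k l hij hkl => (hT i j k l hij hkl).2.2.1

theorem IsPUMatrix.crossRelations (hT : IsPUMatrix p q u T) (hpu : PUCondition p q u) :
    CrossRelations p p T := by
  obtain ⟨hu, -, hpq, hp, hq, -⟩ := hpu
  refine .of_lt hp hp fun i j k l hij hkl => ?_
  obtain ⟨-, -, hanti, hdiag⟩ := hT i j k l hij hkl
  have sq_mul_inv {a b : Fin n} (hab : a < b) : u ^ 2 * (q a b)⁻¹ = p a b := by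
    rw [← hpq a b hab, mul_inv_cancel_right₀ (left_ne_zero_of_mul_eq_one (hq a b))]
  have hdiag_scaled :
      p k l • (T i k * T j l) - p i j • (T j l * T i k) = (u ^ 2 - 1) • (T i l * T j k) := by
    have := congr(u ^ 2 • $hdiag)
    rwa [smul_sub, smul_smul, smul_smul, smul_smul, sq_mul_inv hkl, sq_mul_inv hij,
      show u ^ 2 * (1 - u⁻¹ ^ 2) = u ^ 2 - 1 by field_simp] at this
  calc
    _ = p k l • (T i k * T j l) - p i j • (T j l * T i k) - (u ^ 2 - 1) • (T i l * T j k) := by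
      rw [smul_sub (p k l), ← hanti, smul_smul, hpq k l hkl]
      module
    _ = 0 := sub_eq_zero.2 hdiag_scaled

end LaplaceExpansion


/-- column Laplace expansion of the quantum determinant along a fixed
`r`-shuffle `τ` of the columns, summed over all `r`-shuffles `β` of the rows. -/
theorem qdet_laplace_col {n : ℕ} (p q : Fin n → Fin n → K) (u : K)
    (hpu : PUCondition p q u) (T : Matrix (Fin n) (Fin n) A)
    (hT : IsPUMatrix p q u T) (r : ℕ) (hr : r ≤ n)
    (τ : Equiv.Perm (Fin n))
    (hτ : ∀ a b : Fin n, a < b → ((b : ℕ) < r ∨ r ≤ (a : ℕ)) → τ a < τ b) :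
    qdet q T
      = ∑ β ∈ Finset.univ.filter
          (fun β : Equiv.Perm (Fin n) =>
            ∀ a b : Fin n, a < b → ((b : ℕ) < r ∨ r ≤ (a : ℕ)) → β a < β b),
          ((qSign p τ)⁻¹ * qSign p β) •
            (qminor q T (fun a : Fin r => β (Fin.castLE hr a))
                (fun a : Fin r => τ (Fin.castLE hr a))
              * qminor q T
                (fun a : Fin (n - r) => β ⟨r + a.val, by have := a.isLt; omega⟩)
                (fun a : Fin (n - r) => τ ⟨r + a.val, by have := a.isLt; omega⟩)) := by
  exact qdet_laplace_col_general (Nat.add_sub_of_le hr) hpu.2.2.2.1 hpu.2.2.2.1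
    hT.antidiagonalRelations (hT.crossRelations hpu) hτ
end
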